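/- arXiv:2012.04705 — 2 statements merged into one kernel-verified Lean document; each statement's English description precedes it below -/
import Mathlib

section
/- Let i ≥ 1, L ≥ 1 and nonnegative integers a_1,…,a_i with a_i ≥ a_j for all j ∈ [i] be given, set K = (i−1)L + Σ_{j=1}^{i} a_j + 1, and let R_u = min{ 2(K−(i−1)L) + i − 2 − a_i , K }. Then the optimal broadcast rate R* of the (a_i,…,a_1)_L-bar-ICP satisfies R_u ≤ 2·R*, i.e., R_u/R* ≤ 2. -/
open Finset

/-- `<m>_n`: the unique element of `{1,…,n}` congruent to `m` modulo `n`. -/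
def angMod (m : ℤ) (n : ℕ) : ℕ :=
  if m % (n : ℤ) = 0 then n else (m % (n : ℤ)).toNat

/-- Message indices of the bar-ICP: pairs in `[K] × [i]`. -/
abbrev Msg (K i : ℕ) : Type :=
  {p : ℕ × ℕ // p.1 ∈ Finset.Icc 1 K ∧ p.2 ∈ Finset.Icc 1 i}

/-- Users of the bar-ICP: elements of `[K]`. -/
abbrev User (K : ℕ) : Type := {k : ℕ // k ∈ Finset.Icc 1 K}

/-- The side-information index set `K_k` of user `k` in the
`(a_i,…,a_1)_L`-bar-ICP, as a set of pairs `(b,t)`. -/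
def knownIdx (K i L : ℕ) (a : ℕ → ℕ) (k : ℕ) : Set (ℕ × ℕ) :=
  {p | ∃ t ∈ Finset.Icc 1 i, ∃ v ∈ Finset.Icc 1 (i - 1), ∃ r ∈ Finset.Icc 1 L,
    p.2 = t ∧
    p.1 = angMod ((k : ℤ) + (∑ j ∈ Finset.Icc 1 v, (a (angMod ((i : ℤ) + (t : ℤ) - (j : ℤ)) i) : ℤ))
        + ((v : ℤ) - 1) * (L : ℤ) + (r : ℤ)) K}

/-- Want set of user `u` in the bar-ICP: the messages `(u,t)`, `t ∈ [i]`. -/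
def barWant (K i : ℕ) (u : User K) : Set (Msg K i) :=
  {p | p.1.1 = u.1}

/-- Known set of user `u` in the bar-ICP. -/
def barKnown (K i L : ℕ) (a : ℕ → ℕ) (u : User K) : Set (Msg K i) :=
  {p | p.1 ∈ knownIdx K i L a u.1}

/-- A valid index code of length `ℓ` for message length `t` for the index coding
problem with message index set `I`, users `U`, want sets `W` and known sets `Kn`. -/
def ValidCode {I U : Type} (W Kn : U → Set I) (t ℓ : ℕ) : Prop :=
  ∃ E : (I → Fin t → Bool) → Fin ℓ → Bool,
  ∃ D : ∀ u : U, (Fin ℓ → Bool) → (↥(Kn u) → Fin t → Bool) → (↥(W u) → Fin t → Bool),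
    ∀ x : I → Fin t → Bool, ∀ u : U,
      D u (E x) (fun m => x m.1) = fun m => x m.1

/-- The optimal broadcast rate of an index coding problem. -/
noncomputable def optRate {I U : Type} (W Kn : U → Set I) : ℝ :=
  sInf {ρ : ℝ | ∃ t ℓ : ℕ, 1 ≤ t ∧ ValidCode W Kn t ℓ ∧ ρ = (ℓ : ℝ) / (t : ℝ)}

theorem angMod_mem (m : ℤ) (n : ℕ) (hn : 1 ≤ n) : angMod m n ∈ Finset.Icc 1 n := by
  have h1 := Int.emod_nonneg m (b := (n : ℤ)) (by omega)
  have h2 := Int.emod_lt_of_pos m (b := (n : ℤ)) (by omega)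
  unfold angMod
  rw [Finset.mem_Icc]
  split_ifs <;> omega

theorem angMod_spec (m : ℤ) (n : ℕ) (hn : 1 ≤ n) : ∃ q : ℤ, m = (n : ℤ) * q + (angMod m n : ℤ) := by
  have h1 := Int.emod_nonneg m (b := (n : ℤ)) (by omega)
  have h3 := Int.mul_ediv_add_emod m n
  unfold angMod
  split_ifs with h
  · exact ⟨m / n - 1, by rw [h] at h3; linarith⟩
  · exact ⟨m / n, by rw [Int.toNat_of_nonneg h1]; linarith⟩

theorem small_mul_aux (n : ℕ) (q e : ℤ) (h : (n : ℤ) * q = e) (h1 : e < n) (h2 : -(n : ℤ) < e) :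
    e = 0 := by
  exact Int.eq_zero_of_abs_lt_dvd ⟨q, h.symm⟩ (abs_lt.mpr ⟨h2, h1⟩)

theorem sum_reindex (i : ℕ) (hi : 1 ≤ i) (a : ℕ → ℕ) (f : ℕ → ℤ)
    (hf : ∀ x y : ℕ, f x - f y = (x : ℤ) - y ∨ f x - f y = (y : ℤ) - x) :
    ∑ j ∈ Finset.Icc 1 i, a (angMod (f j) i) = ∑ j ∈ Finset.Icc 1 i, a j := by
  have hinj : Set.InjOn (fun j => angMod (f j) i) (Finset.Icc 1 i : Finset ℕ) := by
    intro x hx y hy hxy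
    simp only at hxy
    simp only [Finset.coe_Icc, Set.mem_Icc] at hx hy
    obtain ⟨q, hq⟩ := angMod_spec (f x) i hi
    obtain ⟨p, hp⟩ := angMod_spec (f y) i hi
    rw [hxy] at hq
    have h0 := small_mul_aux i (q - p) (f x - f y) (by linarith)
      (by rcases hf x y with h | h <;> omega) (by rcases hf x y with h | h <;> omega)
    rcases hf x y with h | h <;> omega
  have him : (Finset.Icc 1 i).image (fun j => angMod (f j) i) = Finset.Icc 1 i := by
    apply Finset.eq_of_subset_of_card_le
    · intro z hz
      obtain ⟨j, _, rfl⟩ := Finset.mem_image.mp hz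
      exact angMod_mem _ _ hi
    · rw [Finset.card_image_of_injOn hinj]
  conv_rhs => rw [← him]
  rw [Finset.sum_image hinj]

theorem known_lt (i L : ℕ) (hi : 1 ≤ i) (a : ℕ → ℕ)
    (K : ℕ) (hK : K = (i - 1) * L + (∑ j ∈ Finset.Icc 1 i, a j) + 1)
    (k : ℕ) (hk : k ∈ Finset.Icc 1 K) (p : ℕ × ℕ) (hp : p ∈ knownIdx K i L a k)
    (hS : p.1 ≤ 1 + a (angMod ((i : ℤ) + (p.2 : ℤ) - 1) i)) : p.1 < k := by
  obtain ⟨t, ht, v, hv, r, hr, h2, h1⟩ := hp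
  rw [h2] at hS
  rw [Finset.mem_Icc] at hk hv hr
  set b : ℕ → ℕ := fun j => a (angMod ((i : ℤ) + (t : ℤ) - (j : ℤ)) i) with hb
  have hsum : (∑ j ∈ Finset.Icc 1 v, (a (angMod ((i : ℤ) + (t : ℤ) - (j : ℤ)) i) : ℤ))
      = ((∑ j ∈ Finset.Icc 1 v, b j : ℕ) : ℤ) := by push_cast; rfl
  have hlow : b 1 ≤ ∑ j ∈ Finset.Icc 1 v, b j :=
    Finset.single_le_sum (f := b) (fun _ _ => Nat.zero_le _) (Finset.mem_Icc.mpr ⟨le_rfl, hv.1⟩)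
  have hup : ∑ j ∈ Finset.Icc 1 v, b j ≤ ∑ j ∈ Finset.Icc 1 i, a j := by
    rw [← sum_reindex i hi a (fun j => (i : ℤ) + t - j) (fun x y => Or.inr (by ring))]
    exact Finset.sum_le_sum_of_subset (Finset.Icc_subset_Icc le_rfl (by omega))
  have hb1 : b 1 = a (angMod ((i : ℤ) + (t : ℤ) - 1) i) := by simp [hb]
  rw [← hb1] at hS
  rw [hsum] at h1
  obtain ⟨w, rfl⟩ : ∃ w, v = w + 1 := ⟨v - 1, by omega⟩
  have hwL : (w + 1) * L ≤ (i - 1) * L := Nat.mul_le_mul_right _ hv.2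
  rw [Nat.add_mul] at hwL
  have hK1 : 1 ≤ K := by omega
  have hm := angMod_mem ((k : ℤ) + ((∑ j ∈ Finset.Icc 1 (w+1), b j : ℕ) : ℤ)
        + (((w + 1 : ℕ) : ℤ) - 1) * (L : ℤ) + (r : ℤ)) K hK1
  obtain ⟨q, hq⟩ := angMod_spec ((k : ℤ) + ((∑ j ∈ Finset.Icc 1 (w+1), b j : ℕ) : ℤ)
        + (((w + 1 : ℕ) : ℤ) - 1) * (L : ℤ) + (r : ℤ)) K hK1
  rw [← h1] at hm hq
  rw [Finset.mem_Icc] at hm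
  have hwc : (((w + 1 : ℕ) : ℤ) - 1) * (L : ℤ) = ((w * L : ℕ) : ℤ) := by push_cast; ring
  rw [hwc] at hq
  generalize w * L = wL at *
  generalize (i - 1) * L = iL at *
  generalize ∑ j ∈ Finset.Icc 1 (w+1), b j = sb at *
  by_contra hlt
  have h0 := small_mul_aux K q _ (eq_sub_of_add_eq hq.symm) (by omega) (by omega)
  omega

theorem code_bound (i L : ℕ) (hi : 1 ≤ i) (a : ℕ → ℕ)
    (K : ℕ) (hK : K = (i - 1) * L + (∑ j ∈ Finset.Icc 1 i, a j) + 1)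
    (t l : ℕ) (hc : ValidCode (barWant K i) (barKnown K i L a) t l) :
    ((∑ j ∈ Finset.Icc 1 i, a j) + i) * t ≤ l := by
  classical
  obtain ⟨E, D, hD⟩ := hc
  set c : ℕ → ℕ := fun τ => a (angMod ((i : ℤ) + (τ : ℤ) - 1) i) with hcdef
  have hcsum : ∑ τ ∈ Finset.Icc 1 i, c τ = ∑ j ∈ Finset.Icc 1 i, a j :=
    sum_reindex i hi a (fun j => (i : ℤ) + j - 1) (fun x y => Or.inl (by ring))
  let T : Finset (Σ _ : ℕ, ℕ) := (Finset.Icc 1 i).sigma (fun τ => Finset.Icc 1 (1 + c τ))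
  have hT : T.card = (∑ j ∈ Finset.Icc 1 i, a j) + i := by
    simp only [T, Finset.card_sigma, Nat.card_Icc, Nat.add_sub_cancel]
    rw [Finset.sum_add_distrib, hcsum]
    simp [add_comm]
  let x : (T → Fin t → Bool) → Msg K i → Fin t → Bool := fun y m =>
    if h : (⟨m.1.2, m.1.1⟩ : Σ _ : ℕ, ℕ) ∈ T then y ⟨_, h⟩ else fun _ => false
  have hinj : Function.Injective (fun y => E (x y)) := by
    intro y y' hy
    simp only at hy
    have key : ∀ n : ℕ, ∀ m : Msg K i, m.1.1 = n → x y m = x y' m := by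
      intro n
      induction n using Nat.strong_induction_on with
      | _ n ih =>
        intro m hm
        have hn : n ∈ Finset.Icc 1 K := hm ▸ m.2.1
        let u : User K := ⟨n, hn⟩
        have e1 := hD (x y) u
        have e2 := hD (x y') u
        have hside : (fun m : barKnown K i L a u => x y m.1) = fun m => x y' m.1 := by
          funext ⟨p, hp⟩
          by_cases hpT : (⟨p.1.2, p.1.1⟩ : Σ _ : ℕ, ℕ) ∈ T
          · have := Finset.mem_Icc.mp (Finset.mem_sigma.mp hpT).2
            exact ih p.1.1 (known_lt i L hi a K hK n hn p.1 hp this.2) p rfl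
          · simp [x, hpT]
        rw [hy, hside, e2] at e1
        exact (congrFun e1 ⟨m, hm⟩).symm
    funext ⟨⟨τ, b⟩, hs⟩
    have hs' := Finset.mem_sigma.mp hs
    have hb := Finset.mem_Icc.mp hs'.2
    have hle : c τ ≤ ∑ τ ∈ Finset.Icc 1 i, c τ :=
      Finset.single_le_sum (f := c) (fun _ _ => Nat.zero_le _) hs'.1
    have hbK : b ∈ Finset.Icc 1 K := by
      rw [Finset.mem_Icc]
      simp only at hb
      omega
    have := key b ⟨(b, τ), hbK, hs'.1⟩ rfl
    simpa [x, hs] using this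
  have hcard := Fintype.card_le_of_injective _ hinj
  simp only [Fintype.card_fun, Fintype.card_bool, Fintype.card_fin, Fintype.card_coe] at hcard
  rw [← pow_mul, hT] at hcard
  have := (Nat.pow_le_pow_iff_right (by norm_num : 1 < 2)).mp hcard
  linarith [mul_comm t ((∑ j ∈ Finset.Icc 1 i, a j) + i)]

theorem code_exists (K i L : ℕ) (a : ℕ → ℕ) :
    ∃ l, ValidCode (barWant K i) (barKnown K i L a) 1 l := by
  classical
  have : Finite (Msg K i) :=
    Finite.of_injective (β := (Finset.Icc 1 K) × (Finset.Icc 1 i))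
      (fun p => (⟨p.1.1, p.2.1⟩, ⟨p.1.2, p.2.2⟩)) (by
        rintro ⟨⟨p, q⟩, h⟩ ⟨⟨p', q'⟩, h'⟩ hh
        simpa using hh)
  have := Fintype.ofFinite (Msg K i)
  let e := Fintype.equivFin (Msg K i)
  refine ⟨Fintype.card (Msg K i), fun x n => x (e.symm n) 0,
    fun u z _ m _ => z (e m.1), ?_⟩
  intro x u
  funext m j
  simp [Subsingleton.elim j 0]

/-- Corollary 3 of the paper: the upper bound
`R_u = min{2(K−(i−1)L)+i−2−a_i, K}` is at most twice the optimal broadcast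
rate of the `(a_i,…,a_1)_L`-bar-ICP. -/
theorem stmt2 (i L : ℕ) (hi : 1 ≤ i) (hL : 1 ≤ L) (a : ℕ → ℕ)
    (hmax : ∀ j ∈ Finset.Icc 1 i, a j ≤ a i)
    (K : ℕ) (hK : K = (i - 1) * L + (∑ j ∈ Finset.Icc 1 i, a j) + 1)
    (Ru : ℝ)
    (hRu : Ru = min (2 * ((K : ℝ) - ((i : ℝ) - 1) * (L : ℝ)) + (i : ℝ) - 2 - (a i : ℝ)) (K : ℝ)) :
    Ru ≤ 2 * optRate (barWant K i) (barKnown K i L a) := by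
  have hb : ((∑ j ∈ Finset.Icc 1 i, a j : ℕ) : ℝ) + i
      ≤ optRate (barWant K i) (barKnown K i L a) := by
    unfold optRate
    apply le_csInf
    · obtain ⟨l, hl⟩ := code_exists K i L a
      exact ⟨_, 1, l, le_rfl, hl, rfl⟩
    · rintro ρ ⟨t, l, ht, hc, rfl⟩
      have h := code_bound i L hi a K hK t l hc
      have ht' : (0 : ℝ) < t := by exact_mod_cast ht
      rw [le_div_iff₀ ht']
      exact_mod_cast h
  have hKr : (K : ℝ) = ((i : ℝ) - 1) * L + ((∑ j ∈ Finset.Icc 1 i, a j : ℕ) : ℝ) + 1 := by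
    rw [hK]
    push_cast [Nat.cast_sub hi]
    ring
  have hai : (0 : ℝ) ≤ a i := Nat.cast_nonneg _
  have hi0 : (0 : ℝ) ≤ i := Nat.cast_nonneg _
  have hmin : Ru ≤ _ := hRu ▸ min_le_left _ _
  rw [hKr] at hmin
  linarith
end

section
/- Let i ≥ 1, L ≥ 1 and nonnegative integers a_1,…,a_i be given, and set K = (i−1)L + Σ_{j=1}^{i} a_j + 1. Color the nodes of the (a_i,…,a_1)_L-bar-ICP by assigning, for each color c ∈ [K], color c to the i nodes (<c + Σ_{m=1}^{v−1} a_m + (v−1)L>_K, v) for v ∈ [i] (so each node receives exactly one color and each color appears exactly once in each column). Then this coloring is proper: whenever two distinct nodes (k_1,v_1) and (k_2,v_2) receive the same color, (k_2,v_2) ∈ K_{k_1} and (k_1,v_1) ∈ K_{k_2}. -/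
open Finset

theorem angMod_congr (x y : ℤ) (n : ℕ) (h : x % (n : ℤ) = y % (n : ℤ)) :
    angMod x n = angMod y n := by
  unfold angMod; rw [h]

theorem angMod_dvd (x : ℤ) (n : ℕ) (hn : 1 ≤ n) : ∃ q : ℤ, (angMod x n : ℤ) = x + n * q := by
  have h := Int.emod_add_mul_ediv x n
  have h0 := Int.emod_nonneg x (b := (n : ℤ)) (by omega)
  unfold angMod
  split_ifs with hx
  · exact ⟨1 - x / n, by rw [mul_sub]; linarith⟩
  · exact ⟨- (x / n), by rw [mul_neg, Int.toNat_of_nonneg h0]; linarith⟩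

theorem angMod_small (m n : ℕ) (h1 : 1 ≤ m) (h2 : m ≤ n) : angMod (m : ℤ) n = m := by
  unfold angMod
  rcases h2.lt_or_eq with h | h
  · rw [Int.emod_eq_of_lt (by omega) (by omega), if_neg (by omega)]; simp
  · subst h; simp

theorem angMod_small' (m n : ℕ) (h1 : 1 ≤ m) (h2 : m ≤ n) : angMod ((n : ℤ) + m) n = m := by
  rw [angMod_congr _ (m : ℤ) n (by simp), angMod_small m n h1 h2]

theorem sum_low (a : ℕ → ℕ) (i t v : ℕ) (ht : t ≤ i) (hv : v + 1 ≤ t) :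
    (∑ j ∈ Icc 1 v, (a (angMod ((i : ℤ) + (t : ℤ) - (j : ℤ)) i) : ℤ))
      = ∑ m ∈ Icc 1 (t - 1), (a m : ℤ) - ∑ m ∈ Icc 1 (t - 1 - v), (a m : ℤ) := by
  induction v with
  | zero => simp
  | succ v ih =>
    obtain ⟨s, rfl⟩ : ∃ s, t = s + v + 2 := ⟨t - v - 2, by omega⟩
    rw [sum_Icc_succ_top (by omega), ih (by omega)]
    have e : (i : ℤ) + ((s + v + 2 : ℕ) : ℤ) - ((v + 1 : ℕ) : ℤ) = (i : ℤ) + ((s + 1 : ℕ) : ℤ) := by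
      push_cast; ring
    rw [e, angMod_small' _ _ (by omega) (by omega),
      show s + v + 2 - 1 - v = s + 1 by omega, show s + v + 2 - 1 - (v + 1) = s by omega,
      sum_Icc_succ_top (b := s) (by omega)]
    ring

theorem sum_high (a : ℕ → ℕ) (i t w : ℕ) (ht1 : 1 ≤ t) (ht : t ≤ i) (hw : w ≤ i) :
    (∑ j ∈ Icc 1 (t - 1 + w), (a (angMod ((i : ℤ) + (t : ℤ) - (j : ℤ)) i) : ℤ))
      = ∑ m ∈ Icc 1 (t - 1), (a m : ℤ) + ∑ m ∈ Icc 1 i, (a m : ℤ)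
        - ∑ m ∈ Icc 1 (i - w), (a m : ℤ) := by
  induction w with
  | zero =>
    rw [add_zero, sum_low a i t (t - 1) ht (by omega)]; simp
  | succ w ih =>
    rw [← add_assoc, sum_Icc_succ_top (by omega), ih (by omega)]
    have e : (i : ℤ) + (t : ℤ) - ((t - 1 + w + 1 : ℕ) : ℤ) = ((i - (w + 1) + 1 : ℕ) : ℤ) := by
      omega
    rw [e, angMod_small _ _ (by omega) (by omega),
      show i - w = i - (w + 1) + 1 by omega, sum_Icc_succ_top (b := i - (w + 1)) (by omega)]
    ring

theorem stmt6_aux (i L : ℕ) (hL : 1 ≤ L) (a : ℕ → ℕ)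
    (K : ℕ) (hK : K = (i - 1) * L + (∑ j ∈ Finset.Icc 1 i, a j) + 1)
    (c k₁ v₁ k₂ v₂ : ℕ) (h1 : 1 ≤ v₁) (h12 : v₁ < v₂) (h2 : v₂ ≤ i)
    (hk₁ : k₁ = angMod ((c : ℤ) + (∑ m ∈ Finset.Icc 1 (v₁ - 1), (a m : ℤ))
        + ((v₁ : ℤ) - 1) * (L : ℤ)) K)
    (hk₂ : k₂ = angMod ((c : ℤ) + (∑ m ∈ Finset.Icc 1 (v₂ - 1), (a m : ℤ))
        + ((v₂ : ℤ) - 1) * (L : ℤ)) K) :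
    (k₂, v₂) ∈ knownIdx K i L a k₁ ∧ (k₁, v₁) ∈ knownIdx K i L a k₂ := by
  have hKZ : (K : ℤ) = ((i : ℤ) - 1) * L + (∑ j ∈ Finset.Icc 1 i, (a j : ℤ)) + 1 := by
    rw [hK]; push_cast [Nat.cast_sub (show 1 ≤ i by omega)]; ring
  obtain ⟨q1, e1⟩ := angMod_dvd ((c : ℤ) + (∑ m ∈ Finset.Icc 1 (v₁ - 1), (a m : ℤ))
        + ((v₁ : ℤ) - 1) * (L : ℤ)) K (by omega)
  obtain ⟨q2, e2⟩ := angMod_dvd ((c : ℤ) + (∑ m ∈ Finset.Icc 1 (v₂ - 1), (a m : ℤ))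
        + ((v₂ : ℤ) - 1) * (L : ℤ)) K (by omega)
  rw [← hk₁] at e1
  rw [← hk₂] at e2
  constructor
  · refine ⟨v₂, mem_Icc.2 ⟨by omega, h2⟩, v₂ - v₁, mem_Icc.2 ⟨by omega, by omega⟩, L,
      mem_Icc.2 ⟨hL, le_rfl⟩, rfl, ?_⟩
    show k₂ = _
    rw [hk₂]
    apply angMod_congr
    rw [sum_low a i v₂ _ h2 (by omega), e1, show v₂ - 1 - (v₂ - v₁) = v₁ - 1 by omega,
      Nat.cast_sub h12.le]
    exact Int.emod_eq_emod_iff_emod_sub_eq_zero.2 (Int.emod_eq_zero_of_dvd ⟨-q1, by push_cast; ring⟩)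
  · refine ⟨v₁, mem_Icc.2 ⟨by omega, by omega⟩, v₁ - 1 + (i - (v₂ - 1)),
      mem_Icc.2 ⟨by omega, by omega⟩, 1, mem_Icc.2 ⟨le_rfl, hL⟩, rfl, ?_⟩
    show k₁ = _
    rw [hk₁]
    apply angMod_congr
    rw [sum_high a i v₁ _ h1 (by omega) (by omega), e2,
      show i - (i - (v₂ - 1)) = v₂ - 1 by omega,
      show ((v₁ - 1 + (i - (v₂ - 1)) : ℕ) : ℤ) = (v₁ : ℤ) + i - v₂ by omega]
    refine Int.emod_eq_emod_iff_emod_sub_eq_zero.2 (Int.emod_eq_zero_of_dvd ⟨-q2 - 1, ?_⟩)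
    rw [mul_sub, mul_one]
    push_cast
    linear_combination hKZ

/-- Lemma 9 of the paper: the coloring assigning, for each
color `c ∈ [K]`, color `c` to the nodes `(<c + Σ_{m=1}^{v−1} a_m + (v−1)L>_K, v)`
for `v ∈ [i]`, is a proper coloring: two distinct nodes receiving the same color
are side-information nodes of each other. -/
theorem stmt6 (i L : ℕ) (hi : 1 ≤ i) (hL : 1 ≤ L) (a : ℕ → ℕ)
    (K : ℕ) (hK : K = (i - 1) * L + (∑ j ∈ Finset.Icc 1 i, a j) + 1)
    (c k₁ v₁ k₂ v₂ : ℕ)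
    (hc : c ∈ Finset.Icc 1 K) (hv₁ : v₁ ∈ Finset.Icc 1 i) (hv₂ : v₂ ∈ Finset.Icc 1 i)
    (hk₁ : k₁ = angMod ((c : ℤ) + (∑ m ∈ Finset.Icc 1 (v₁ - 1), (a m : ℤ))
        + ((v₁ : ℤ) - 1) * (L : ℤ)) K)
    (hk₂ : k₂ = angMod ((c : ℤ) + (∑ m ∈ Finset.Icc 1 (v₂ - 1), (a m : ℤ))
        + ((v₂ : ℤ) - 1) * (L : ℤ)) K)
    (hne : (k₁, v₁) ≠ (k₂, v₂)) :
    (k₂, v₂) ∈ knownIdx K i L a k₁ ∧ (k₁, v₁) ∈ knownIdx K i L a k₂ := by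
  rw [mem_Icc] at hv₁ hv₂
  rcases lt_trichotomy v₁ v₂ with h | h | h
  · exact stmt6_aux i L hL a K hK c k₁ v₁ k₂ v₂ hv₁.1 h hv₂.2 hk₁ hk₂
  · subst h
    exact absurd (by rw [hk₁, hk₂]) hne
  · exact (stmt6_aux i L hL a K hK c k₂ v₂ k₁ v₁ hv₂.1 h hv₁.2 hk₂ hk₁).symm
end
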